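/- Let ω be a finite (signed) Radon measure on T² which also belongs to H^{-1}(T²), i.e. there exists C > 0 such that |∫ φ dω| ≤ C ‖φ‖_{H¹} for all smooth test functions φ. Then ω has no atoms: for every point x₀ ∈ T², ω({x₀}) = 0. -/

import Mathlib

open MeasureTheory Set

/-- The two-dimensional torus. -/
abbrev T2 : Type := AddCircle (1:ℝ) × AddCircle (1:ℝ)

/-- The projection from the plane to the torus. -/
noncomputable def q2 (p : ℝ × ℝ) : T2 := ((p.1 : AddCircle (1:ℝ)), (p.2 : AddCircle (1:ℝ)))

/-- The `H¹` norm of a (periodic) function on the plane, computed over the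
fundamental domain `[0,1]²`. -/
noncomputable def H1norm (Φ : ℝ × ℝ → ℝ) : ℝ :=
  Real.sqrt (∫ p in Set.Icc ((0:ℝ), (0:ℝ)) (1, 1), ((Φ p)^2 + ‖fderiv ℝ Φ p‖^2))

/-!
A point of a surface has zero `H¹` capacity. Let `0 ≤ w ≤ 1` be a smooth bump equal to `1` only at
`x₀`, and take the test functions `Φ_N = (∑_{n<N} w^(n+1)/(n+1)) / H_N` with `H_N` the harmonic
number: truncations of the singularity `-log (1 - w)`, normalised so that `Φ_N x₀ = 1`. They lie
between `0` and `1` and tend to `0` off `x₀`, so `∫ Φ_N dω → ω {x₀}` by dominated convergence.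

Write `P = ∑_{n<N} w^n`. Then `∇Φ_N = P ∇w / H_N`, and `|∇w|² ≤ K (1 - w)` near a maximum, so
`|∇Φ_N|² ≤ K P² (1 - w) / H_N² ≤ K P / H_N²`, while `Φ_N² ≤ 2 P / H_N²` by Cauchy–Schwarz.
In dimension two `∫ w^n = O(1/n)` (for `w = cos² (π x) cos² (π y)` this is Wallis' bound), hence
`∫ P = O(H_N)` and `‖Φ_N‖²_{H¹} = O(1 / H_N) → 0`.
-/

open Filter Topology

section HarmonicNumbers

lemma harmonic_cast_nonneg (N : ℕ) : (0 : ℝ) ≤ harmonic N := by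
  rcases eq_or_ne N 0 with rfl | hN
  · simp
  · exact_mod_cast (harmonic_pos hN).le

lemma harmonic_cast_eq_sum (N : ℕ) :
    (harmonic N : ℝ) = ∑ n ∈ Finset.range N, ((n : ℝ) + 1)⁻¹ := by
  simp [harmonic]

lemma tendsto_harmonic_atTop : Tendsto (fun N : ℕ => (harmonic N : ℝ)) atTop atTop := by
  refine tendsto_atTop_mono log_add_one_le_harmonic ?_
  exact Real.tendsto_log_atTop.comp
    (tendsto_natCast_atTop_atTop.comp (tendsto_add_atTop_nat 1))

lemma sum_range_inv_succ_sq_le_two (N : ℕ) :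
    ∑ n ∈ Finset.range N, (((n : ℝ) + 1)⁻¹) ^ 2 ≤ 2 := by
  calc ∑ n ∈ Finset.range N, (((n : ℝ) + 1)⁻¹) ^ 2
      = ∑ n ∈ Finset.Ioo 0 (N + 1), ((n : ℝ) ^ 2)⁻¹ := by
        rw [Finset.range_eq_Ico, ← Finset.Ico_add_one_left_eq_Ioo,
          ← Finset.sum_Ico_add' (fun n : ℕ => ((n : ℝ) ^ 2)⁻¹)]
        simp
    _ ≤ 2 := by simpa using sum_Ioo_inv_sq_le (α := ℝ) 0 (N + 1)

end HarmonicNumbers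

section TruncatedLog

/-- The `N`-th partial sum of the power series of `-log (1 - x)`, a polynomial approximation of the
logarithmic singularity at `1`. -/
noncomputable def truncatedLog (N : ℕ) (x : ℝ) : ℝ :=
  ∑ n ∈ Finset.range N, x ^ (n + 1) / (n + 1)

variable {N : ℕ} {x : ℝ}

lemma truncatedLog_one (N : ℕ) : truncatedLog N 1 = harmonic N := by
  simp [truncatedLog, harmonic_cast_eq_sum]

lemma truncatedLog_nonneg (hx : 0 ≤ x) : 0 ≤ truncatedLog N x :=
  Finset.sum_nonneg fun _ _ => by positivity

lemma truncatedLog_le_harmonic (hx : x ∈ Icc (0 : ℝ) 1) : truncatedLog N x ≤ harmonic N := by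
  rw [← truncatedLog_one]
  exact Finset.sum_le_sum fun n _ => by have := hx.1; gcongr; exact hx.2

lemma truncatedLog_le_neg_log (h0 : 0 ≤ x) (h1 : x < 1) :
    truncatedLog N x ≤ -Real.log (1 - x) :=
  sum_le_hasSum _ (fun _ _ => by positivity)
    (Real.hasSum_pow_div_log_of_abs_lt_one (by rwa [abs_of_nonneg h0]))

lemma hasDerivAt_truncatedLog (N : ℕ) (x : ℝ) :
    HasDerivAt (truncatedLog N) (∑ n ∈ Finset.range N, x ^ n) x := by
  refine HasDerivAt.fun_sum fun n _ => ?_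
  refine ((hasDerivAt_pow (n + 1) x).div_const ((n : ℝ) + 1)).congr_deriv ?_
  have : (n : ℝ) + 1 ≠ 0 := by positivity
  rw [Nat.add_sub_cancel, Nat.cast_succ, mul_div_cancel_left₀ _ this]

lemma contDiff_truncatedLog {k : WithTop ℕ∞} (N : ℕ) : ContDiff ℝ k (truncatedLog N) := by
  unfold truncatedLog
  fun_prop

lemma sq_truncatedLog_le (hx : x ∈ Icc (0 : ℝ) 1) :
    truncatedLog N x ^ 2 ≤ 2 * ∑ n ∈ Finset.range N, x ^ n := by
  have hpow (n : ℕ) : (x ^ (n + 1)) ^ 2 ≤ x ^ n := by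
    rw [← pow_mul]
    exact pow_le_pow_of_le_one hx.1 hx.2 (by lia)
  calc truncatedLog N x ^ 2
      = (∑ n ∈ Finset.range N, ((n : ℝ) + 1)⁻¹ * x ^ (n + 1)) ^ 2 := by
        simp only [truncatedLog, div_eq_inv_mul]
    _ ≤ (∑ n ∈ Finset.range N, (((n : ℝ) + 1)⁻¹) ^ 2) *
          ∑ n ∈ Finset.range N, (x ^ (n + 1)) ^ 2 := Finset.sum_mul_sq_le_sq_mul_sq _ _ _
    _ ≤ 2 * ∑ n ∈ Finset.range N, x ^ n := by
        gcongr
        · exact sum_range_inv_succ_sq_le_two N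
        · exact hpow _

lemma sq_geom_sum_mul_one_sub_le (hx : x ∈ Icc (0 : ℝ) 1) :
    (∑ n ∈ Finset.range N, x ^ n) ^ 2 * (1 - x) ≤ ∑ n ∈ Finset.range N, x ^ n := by
  have hsum : 0 ≤ ∑ n ∈ Finset.range N, x ^ n :=
    Finset.sum_nonneg fun _ _ => pow_nonneg hx.1 _
  calc (∑ n ∈ Finset.range N, x ^ n) ^ 2 * (1 - x)
      = (∑ n ∈ Finset.range N, x ^ n) * (1 - x ^ N) := by rw [← geom_sum_mul_neg]; ring
    _ ≤ ∑ n ∈ Finset.range N, x ^ n :=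
        mul_le_of_le_one_right hsum (sub_le_self _ (pow_nonneg hx.1 _))

end TruncatedLog

section LogProfile

/-- The truncated logarithm normalised to take the value `1` at `1`; composed with a function
`0 ≤ w ≤ 1` it approximates the indicator of `{w = 1}`. Since `harmonic 0 = 0`, it vanishes for
`N = 0`. -/
noncomputable def logProfile (N : ℕ) (x : ℝ) : ℝ := truncatedLog N x / harmonic N

variable {N : ℕ} {x : ℝ}

lemma logProfile_one (hN : N ≠ 0) : logProfile N 1 = 1 := by
  rw [logProfile, truncatedLog_one, div_self (by exact_mod_cast (harmonic_pos hN).ne')]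

lemma logProfile_mem_Icc (hx : x ∈ Icc (0 : ℝ) 1) : logProfile N x ∈ Icc (0 : ℝ) 1 :=
  ⟨div_nonneg (truncatedLog_nonneg hx.1) (harmonic_cast_nonneg N),
    div_le_one_of_le₀ (truncatedLog_le_harmonic hx) (harmonic_cast_nonneg N)⟩

lemma contDiff_logProfile {k : WithTop ℕ∞} (N : ℕ) : ContDiff ℝ k (logProfile N) :=
  (contDiff_truncatedLog N).div_const _

lemma tendsto_logProfile_of_lt_one (h0 : 0 ≤ x) (h1 : x < 1) :
    Tendsto (fun N => logProfile N x) atTop (𝓝 0) :=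
  squeeze_zero
    (fun N => div_nonneg (truncatedLog_nonneg h0) (harmonic_cast_nonneg N))
    (fun N => div_le_div_of_nonneg_right (truncatedLog_le_neg_log h0 h1) (harmonic_cast_nonneg N))
    (tendsto_harmonic_atTop.const_div_atTop _)

lemma tendsto_logProfile_indicator {X : Type*} {w : X → ℝ} (hw : ∀ z, w z ∈ Icc (0 : ℝ) 1)
    (z : X) :
    Tendsto (fun N => logProfile N (w z)) atTop (𝓝 ((w ⁻¹' {1}).indicator 1 z)) := by
  rcases (hw z).2.eq_or_lt with h | h
  · rw [indicator_of_mem (show z ∈ w ⁻¹' {1} from h), Pi.one_apply]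
    refine tendsto_const_nhds.congr' ?_
    filter_upwards [eventually_ne_atTop 0] with N hN
    rw [h, logProfile_one hN]
  · rw [indicator_of_notMem (show z ∉ w ⁻¹' {1} from h.ne)]
    exact tendsto_logProfile_of_lt_one (hw z).1 h

lemma tendsto_integral_logProfile {X : Type*} [MeasurableSpace X] (μ : Measure X)
    [IsFiniteMeasure μ] {w : X → ℝ} (hw_meas : Measurable w) (hw : ∀ z, w z ∈ Icc (0 : ℝ) 1) :
    Tendsto (fun N => ∫ z, logProfile N (w z) ∂μ) atTop (𝓝 (μ.real (w ⁻¹' {1}))) := by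
  rw [← integral_indicator_one (hw_meas (measurableSet_singleton 1))]
  refine tendsto_integral_of_dominated_convergence (fun _ => (1 : ℝ))
    (fun N => ?_) (integrable_const 1) (fun N => ae_of_all μ fun z => ?_)
    (ae_of_all μ (tendsto_logProfile_indicator hw))
  · exact ((contDiff_logProfile (k := 0) N).continuous.measurable.comp
      hw_meas).aestronglyMeasurable
  · have h := logProfile_mem_Icc (N := N) (hw z)
    rw [Real.norm_of_nonneg h.1]
    exact h.2

end LogProfile

section EnergyEstimate

lemma sq_add_sq_norm_fderiv_logProfile_comp_le {E : Type*} [NormedAddCommGroup E]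
    [NormedSpace ℝ E] {w : E → ℝ} {p : E} {K : ℝ} (hw : DifferentiableAt ℝ w p)
    (hp : w p ∈ Icc (0 : ℝ) 1) (hK : 0 ≤ K) (hgrad : ‖fderiv ℝ w p‖ ^ 2 ≤ K * (1 - w p)) (N : ℕ) :
    logProfile N (w p) ^ 2 + ‖fderiv ℝ (fun q => logProfile N (w q)) p‖ ^ 2 ≤
      (2 + K) / (harmonic N : ℝ) ^ 2 * ∑ n ∈ Finset.range N, w p ^ n := by
  set S := ∑ n ∈ Finset.range N, w p ^ n
  have hderiv : fderiv ℝ (fun q => logProfile N (w q)) p = (S / harmonic N) • fderiv ℝ w p :=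
    (((hasDerivAt_truncatedLog N (w p)).div_const _).comp_hasFDerivAt p hw.hasFDerivAt).fderiv
  have hvalue : truncatedLog N (w p) ^ 2 ≤ 2 * S := sq_truncatedLog_le hp
  have hgradient : S ^ 2 * ‖fderiv ℝ w p‖ ^ 2 ≤ K * S :=
    calc S ^ 2 * ‖fderiv ℝ w p‖ ^ 2 ≤ S ^ 2 * (K * (1 - w p)) := by gcongr
      _ = K * (S ^ 2 * (1 - w p)) := by ring
      _ ≤ K * S := by gcongr; exact sq_geom_sum_mul_one_sub_le hp
  calc logProfile N (w p) ^ 2 + ‖fderiv ℝ (fun q => logProfile N (w q)) p‖ ^ 2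
      = (truncatedLog N (w p) ^ 2 + S ^ 2 * ‖fderiv ℝ w p‖ ^ 2) / (harmonic N : ℝ) ^ 2 := by
        rw [hderiv, norm_smul, mul_pow, Real.norm_eq_abs, sq_abs, logProfile]
        ring
    _ ≤ (2 * S + K * S) / (harmonic N : ℝ) ^ 2 := by gcongr
    _ = (2 + K) / (harmonic N : ℝ) ^ 2 * S := by ring

variable {w : ℝ × ℝ → ℝ} {K A : ℝ}

lemma setIntegral_geom_sum_le (hw : Continuous w)
    (hmoment : ∀ n : ℕ, ∫ p in Icc ((0 : ℝ), (0 : ℝ)) (1, 1), w p ^ n ≤ A * ((n : ℝ) + 1)⁻¹)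
    (N : ℕ) :
    ∫ p in Icc ((0 : ℝ), (0 : ℝ)) (1, 1), ∑ n ∈ Finset.range N, w p ^ n ≤ A * harmonic N := by
  have hint (n : ℕ) : IntegrableOn (fun p => w p ^ n) (Icc ((0 : ℝ), (0 : ℝ)) (1, 1)) :=
    (hw.pow n).integrableOn_Icc
  rw [integral_finsetSum _ fun n _ => hint n, harmonic_cast_eq_sum,
    Finset.mul_sum]
  exact Finset.sum_le_sum fun n _ => hmoment n

lemma H1norm_logProfile_comp_le (hw : ContDiff ℝ 1 w) (hw01 : ∀ p, w p ∈ Icc (0 : ℝ) 1)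
    (hK : 0 ≤ K) (hgrad : ∀ p, ‖fderiv ℝ w p‖ ^ 2 ≤ K * (1 - w p))
    (hmoment : ∀ n : ℕ, ∫ p in Icc ((0 : ℝ), (0 : ℝ)) (1, 1), w p ^ n ≤ A * ((n : ℝ) + 1)⁻¹)
    (N : ℕ) :
    H1norm (fun p => logProfile N (w p)) ≤ √((2 + K) * A / harmonic N) := by
  have hΦ : ContDiff ℝ 1 (fun p => logProfile N (w p)) := (contDiff_logProfile N).comp hw
  have hcont : Continuous fun p =>
      logProfile N (w p) ^ 2 + ‖fderiv ℝ (fun q => logProfile N (w q)) p‖ ^ 2 :=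
    (hΦ.continuous.pow 2).add ((hΦ.continuous_fderiv one_ne_zero).norm.pow 2)
  have hw_cont : Continuous w := hw.continuous
  have hcont_sum : Continuous fun p =>
      (2 + K) / (harmonic N : ℝ) ^ 2 * ∑ n ∈ Finset.range N, w p ^ n := by fun_prop
  refine Real.sqrt_le_sqrt ?_
  calc ∫ p in Icc ((0 : ℝ), (0 : ℝ)) (1, 1),
        (logProfile N (w p) ^ 2 + ‖fderiv ℝ (fun q => logProfile N (w q)) p‖ ^ 2)
      ≤ ∫ p in Icc ((0 : ℝ), (0 : ℝ)) (1, 1),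
          (2 + K) / (harmonic N : ℝ) ^ 2 * ∑ n ∈ Finset.range N, w p ^ n :=
        integral_mono hcont.integrableOn_Icc hcont_sum.integrableOn_Icc fun p =>
          sq_add_sq_norm_fderiv_logProfile_comp_le (hw.differentiable one_ne_zero p) (hw01 p) hK
            (hgrad p) N
    _ ≤ (2 + K) / (harmonic N : ℝ) ^ 2 * (A * harmonic N) := by
        rw [integral_const_mul]
        gcongr
        exact setIntegral_geom_sum_le hw_cont hmoment N
    _ = (2 + K) * A / harmonic N := by
        rcases eq_or_ne (harmonic N : ℝ) 0 with h | h
        · simp [h]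
        · field_simp

lemma tendsto_H1norm_logProfile_comp (hw : ContDiff ℝ 1 w) (hw01 : ∀ p, w p ∈ Icc (0 : ℝ) 1)
    (hK : 0 ≤ K) (hgrad : ∀ p, ‖fderiv ℝ w p‖ ^ 2 ≤ K * (1 - w p))
    (hmoment : ∀ n : ℕ, ∫ p in Icc ((0 : ℝ), (0 : ℝ)) (1, 1), w p ^ n ≤ A * ((n : ℝ) + 1)⁻¹) :
    Tendsto (fun N => H1norm (fun p => logProfile N (w p))) atTop (𝓝 0) := by
  refine squeeze_zero (fun N => Real.sqrt_nonneg _)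
    (H1norm_logProfile_comp_le hw hw01 hK hgrad hmoment) ?_
  simpa using (tendsto_harmonic_atTop.const_div_atTop ((2 + K) * A)).sqrt

end EnergyEstimate

section GradientOfPeak

variable {E : Type*} [NormedAddCommGroup E] [NormedSpace ℝ E] {f g : E → ℝ} {p : E} {K : ℝ}

lemma sq_norm_fderiv_cos_sq_le (hf : DifferentiableAt ℝ f p) :
    ‖fderiv ℝ (fun q => Real.cos (f q) ^ 2) p‖ ^ 2 ≤
      4 * ‖fderiv ℝ f p‖ ^ 2 * (1 - Real.cos (f p) ^ 2) := by
  have hderiv : fderiv ℝ (fun q => Real.cos (f q) ^ 2) p =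
      (-(2 * Real.cos (f p) * Real.sin (f p))) • fderiv ℝ f p := by
    refine (((Real.hasDerivAt_cos (f p)).pow 2).congr_deriv ?_
      |>.comp_hasFDerivAt p hf.hasFDerivAt).fderiv
    ring
  rw [hderiv, norm_smul, mul_pow, Real.norm_eq_abs, sq_abs, ← Real.sin_sq]
  calc (-(2 * Real.cos (f p) * Real.sin (f p))) ^ 2 * ‖fderiv ℝ f p‖ ^ 2
      = Real.cos (f p) ^ 2 * (4 * ‖fderiv ℝ f p‖ ^ 2 * Real.sin (f p) ^ 2) := by ring
    _ ≤ 4 * ‖fderiv ℝ f p‖ ^ 2 * Real.sin (f p) ^ 2 :=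
        mul_le_of_le_one_left (by positivity) (Real.cos_sq_le_one _)

lemma sq_norm_fderiv_cos_sq_pi_mul_le {ℓ : E →L[ℝ] ℝ} (hℓ : ‖ℓ‖ ≤ 1) (a : ℝ) (p : E) :
    ‖fderiv ℝ (fun q => Real.cos (Real.pi * (ℓ q - a)) ^ 2) p‖ ^ 2 ≤
      4 * Real.pi ^ 2 * (1 - Real.cos (Real.pi * (ℓ p - a)) ^ 2) := by
  have hderiv : fderiv ℝ (fun q => Real.pi * (ℓ q - a)) p = Real.pi • ℓ :=
    ((ℓ.hasFDerivAt.sub_const a).const_mul Real.pi).fderiv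
  refine (sq_norm_fderiv_cos_sq_le (by fun_prop)).trans ?_
  rw [hderiv, norm_smul, Real.norm_of_nonneg Real.pi_pos.le]
  gcongr
  · exact sub_nonneg.2 (Real.cos_sq_le_one _)
  · exact mul_le_of_le_one_right Real.pi_pos.le hℓ

lemma sq_norm_fderiv_mul_le (hf : DifferentiableAt ℝ f p) (hg : DifferentiableAt ℝ g p)
    (hfp : f p ∈ Icc (0 : ℝ) 1) (hgp : g p ∈ Icc (0 : ℝ) 1)
    (hf_grad : ‖fderiv ℝ f p‖ ^ 2 ≤ K * (1 - f p)) (hg_grad : ‖fderiv ℝ g p‖ ^ 2 ≤ K * (1 - g p)) :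
    ‖fderiv ℝ (fun q => f q * g q) p‖ ^ 2 ≤ 4 * K * (1 - f p * g p) := by
  have hnorm : ‖fderiv ℝ (fun q => f q * g q) p‖ ≤ ‖fderiv ℝ f p‖ + ‖fderiv ℝ g p‖ := by
    rw [fderiv_fun_mul hf hg]
    calc ‖f p • fderiv ℝ g p + g p • fderiv ℝ f p‖
        ≤ f p * ‖fderiv ℝ g p‖ + g p * ‖fderiv ℝ f p‖ := by
          refine (norm_add_le _ _).trans_eq ?_
          rw [norm_smul, norm_smul, Real.norm_of_nonneg hfp.1, Real.norm_of_nonneg hgp.1]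
      _ ≤ ‖fderiv ℝ g p‖ + ‖fderiv ℝ f p‖ :=
          add_le_add (mul_le_of_le_one_left (norm_nonneg _) hfp.2)
            (mul_le_of_le_one_left (norm_nonneg _) hgp.2)
      _ = ‖fderiv ℝ f p‖ + ‖fderiv ℝ g p‖ := add_comm _ _
  have hf_nonneg : 0 ≤ K * (1 - f p) := (sq_nonneg _).trans hf_grad
  have hg_nonneg : 0 ≤ K * (1 - g p) := (sq_nonneg _).trans hg_grad
  have hf_le : K * (1 - f p) ≤ K * (1 - f p * g p) := by
    linarith [mul_nonneg hfp.1 hg_nonneg]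
  have hg_le : K * (1 - g p) ≤ K * (1 - f p * g p) := by
    linarith [mul_nonneg hgp.1 hf_nonneg]
  calc ‖fderiv ℝ (fun q => f q * g q) p‖ ^ 2
      ≤ (‖fderiv ℝ f p‖ + ‖fderiv ℝ g p‖) ^ 2 := by gcongr
    _ ≤ 2 * (‖fderiv ℝ f p‖ ^ 2 + ‖fderiv ℝ g p‖ ^ 2) := add_sq_le
    _ ≤ 4 * K * (1 - f p * g p) := by linarith

end GradientOfPeak

section WallisBound

lemma integral_cos_pow_two_mul_succ (t : ℝ) (n : ℕ) :
    ∫ x in t..t + Real.pi, Real.cos x ^ (2 * (n + 1)) =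
      (2 * n + 1) / (2 * n + 2) * ∫ x in t..t + Real.pi, Real.cos x ^ (2 * n) := by
  have hboundary : Real.cos (t + Real.pi) ^ (2 * n + 1) * Real.sin (t + Real.pi) =
      Real.cos t ^ (2 * n + 1) * Real.sin t := by
    rw [Real.cos_add_pi, Real.sin_add_pi, (odd_two_mul_add_one n).neg_pow, neg_mul_neg]
  rw [mul_add, mul_one, integral_cos_pow, hboundary, sub_self, zero_div, zero_add]
  push_cast
  rfl

lemma two_mul_add_one_mul_sq_integral_cos_pow_le (t : ℝ) (n : ℕ) :
    (2 * n + 1) * (∫ x in t..t + Real.pi, Real.cos x ^ (2 * n)) ^ 2 ≤ Real.pi ^ 2 := by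
  induction n with
  | zero => simp
  | succ n ih =>
    rw [integral_cos_pow_two_mul_succ]
    set I := ∫ x in t..t + Real.pi, Real.cos x ^ (2 * n)
    have hratio : ((2 * n + 3) * (2 * n + 1) / (2 * n + 2) ^ 2 : ℝ) ≤ 1 := by
      rw [div_le_one (by positivity)]
      linarith
    calc (2 * (n + 1 : ℕ) + 1) * ((2 * n + 1) / (2 * n + 2) * I) ^ 2
        = (2 * n + 3) * (2 * n + 1) / (2 * n + 2) ^ 2 * ((2 * n + 1) * I ^ 2) := by
          push_cast
          field_simp
          ring
      _ ≤ (2 * n + 1) * I ^ 2 := mul_le_of_le_one_left (by positivity) hratio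
      _ ≤ Real.pi ^ 2 := ih

lemma sq_integral_cos_sq_pow_le (a : ℝ) (n : ℕ) :
    (∫ x in Icc (0 : ℝ) 1, (Real.cos (Real.pi * (x - a)) ^ 2) ^ n) ^ 2 ≤ (2 * (n : ℝ) + 1)⁻¹ := by
  set I := ∫ x in Icc (0 : ℝ) 1, (Real.cos (Real.pi * (x - a)) ^ 2) ^ n
  have hI : Real.pi * I =
      ∫ x in (-(Real.pi * a))..-(Real.pi * a) + Real.pi, Real.cos x ^ (2 * n) := by
    simp only [I, integral_Icc_eq_integral_Ioc, ← intervalIntegral.integral_of_le zero_le_one,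
      ← pow_mul, mul_sub]
    rw [intervalIntegral.mul_integral_comp_mul_sub (f := fun x => Real.cos x ^ (2 * n))]
    congr 1 <;> ring
  have hwallis := two_mul_add_one_mul_sq_integral_cos_pow_le (-(Real.pi * a)) n
  rw [← hI, mul_pow, mul_left_comm] at hwallis
  rw [← one_div, le_div_iff₀' (by positivity)]
  exact le_of_mul_le_mul_left (hwallis.trans_eq (mul_one _).symm) (by positivity)

end WallisBound

section CirclePeak

/-- The function `cos² (π x / T)` on the circle `ℝ / Tℤ`, a smooth bump whose maximum `1` is
attained only at `0`. It is written through `AddCircle.toCircle` and the half-angle formula, so that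
no descent to the quotient is needed. -/
noncomputable def circlePeak {T : ℝ} (z : AddCircle T) : ℝ := (1 + (z.toCircle : ℂ).re) / 2

variable {T : ℝ}

lemma circlePeak_coe (x : ℝ) :
    circlePeak (x : AddCircle T) = Real.cos (Real.pi / T * x) ^ 2 := by
  rw [circlePeak, AddCircle.toCircle_apply_mk, Circle.coe_exp, Complex.exp_ofReal_mul_I_re,
    Real.cos_sq]
  ring_nf

lemma continuous_circlePeak : Continuous (circlePeak : AddCircle T → ℝ) := by
  unfold circlePeak
  fun_prop

lemma circlePeak_mem_Icc (z : AddCircle T) : circlePeak z ∈ Icc (0 : ℝ) 1 := by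
  obtain ⟨x, rfl⟩ := QuotientAddGroup.mk_surjective z
  exact circlePeak_coe (T := T) x ▸ ⟨sq_nonneg _, Real.cos_sq_le_one _⟩

lemma circlePeak_eq_one_iff (hT : T ≠ 0) {z : AddCircle T} : circlePeak z = 1 ↔ z = 0 := by
  rw [← (AddCircle.injective_toCircle hT).eq_iff, AddCircle.toCircle_zero]
  refine ⟨fun h => ?_, fun h => by simp [circlePeak, h]⟩
  have hre : (z.toCircle : ℂ).re = 1 := by
    rw [circlePeak] at h
    linarith
  have him : (z.toCircle : ℂ).im ^ 2 = 0 := by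
    rw [← Complex.sq_norm_sub_sq_re, Circle.norm_coe, hre, sub_self]
  exact Circle.ext (Complex.ext hre (pow_eq_zero_iff two_ne_zero |>.1 him))

end CirclePeak

section TorusPeak

/-- The bump `cos² (π (x - a)) * cos² (π (y - b))` on the torus, whose maximum `1` is attained only
at `x₀ = (a, b)`. The product form makes the integrals of its powers factorise. -/
noncomputable def torusPeak (x₀ x : T2) : ℝ := circlePeak (x.1 - x₀.1) * circlePeak (x.2 - x₀.2)

lemma torusPeak_mem_Icc (x₀ x : T2) : torusPeak x₀ x ∈ Icc (0 : ℝ) 1 :=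
  unitInterval.mul_mem (circlePeak_mem_Icc _) (circlePeak_mem_Icc _)

lemma continuous_torusPeak (x₀ : T2) : Continuous (torusPeak x₀) :=
  (continuous_circlePeak.comp (by fun_prop)).mul (continuous_circlePeak.comp (by fun_prop))

lemma torusPeak_preimage_one (x₀ : T2) : torusPeak x₀ ⁻¹' {1} = {x₀} := by
  ext x
  have hu := circlePeak_mem_Icc (x.1 - x₀.1)
  have hv := circlePeak_mem_Icc (x.2 - x₀.2)
  have hmul : torusPeak x₀ x = 1 ↔
      circlePeak (x.1 - x₀.1) = 1 ∧ circlePeak (x.2 - x₀.2) = 1 := by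
    refine ⟨fun h => ?_, fun h => by rw [torusPeak, h.1, h.2, one_mul]⟩
    exact ⟨hu.2.antisymm (h.ge.trans (mul_le_of_le_one_right hu.1 hv.2)),
      hv.2.antisymm (h.ge.trans (mul_le_of_le_one_left hv.1 hu.2))⟩
  simp only [mem_preimage, mem_singleton_iff, hmul, circlePeak_eq_one_iff one_ne_zero, sub_eq_zero,
    Prod.ext_iff]

lemma torusPeak_q2 (c p : ℝ × ℝ) :
    torusPeak (q2 c) (q2 p) =
      Real.cos (Real.pi * (p.1 - c.1)) ^ 2 * Real.cos (Real.pi * (p.2 - c.2)) ^ 2 := by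
  simp only [torusPeak, q2, ← AddCircle.coe_sub, circlePeak_coe, div_one]

lemma contDiff_torusPeak_q2 {k : WithTop ℕ∞} (c : ℝ × ℝ) :
    ContDiff ℝ k fun p => torusPeak (q2 c) (q2 p) := by
  simp only [torusPeak_q2]
  fun_prop

lemma sq_norm_fderiv_torusPeak_q2_le (c p : ℝ × ℝ) :
    ‖fderiv ℝ (fun p => torusPeak (q2 c) (q2 p)) p‖ ^ 2 ≤
      16 * Real.pi ^ 2 * (1 - torusPeak (q2 c) (q2 p)) := by
  have hmem (θ : ℝ) : Real.cos θ ^ 2 ∈ Icc (0 : ℝ) 1 := ⟨sq_nonneg _, Real.cos_sq_le_one θ⟩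
  have hprod := sq_norm_fderiv_mul_le
    (f := fun q : ℝ × ℝ => Real.cos (Real.pi * (q.1 - c.1)) ^ 2)
    (g := fun q => Real.cos (Real.pi * (q.2 - c.2)) ^ 2)
    (by fun_prop) (by fun_prop) (hmem _) (hmem _)
    (sq_norm_fderiv_cos_sq_pi_mul_le (ContinuousLinearMap.norm_fst_le ℝ ℝ ℝ) c.1 p)
    (sq_norm_fderiv_cos_sq_pi_mul_le (ContinuousLinearMap.norm_snd_le ℝ ℝ ℝ) c.2 p)
  simp only [torusPeak_q2]
  exact hprod.trans_eq (by ring)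

lemma setIntegral_torusPeak_q2_pow_le (c : ℝ × ℝ) (n : ℕ) :
    ∫ p in Icc ((0 : ℝ), (0 : ℝ)) (1, 1), torusPeak (q2 c) (q2 p) ^ n ≤ ((n : ℝ) + 1)⁻¹ := by
  simp only [torusPeak_q2, mul_pow, ← Icc_prod_Icc, Measure.volume_eq_prod]
  rw [setIntegral_prod_mul (fun x => (Real.cos (Real.pi * (x - c.1)) ^ 2) ^ n)
    (fun y => (Real.cos (Real.pi * (y - c.2)) ^ 2) ^ n)]
  set I := ∫ x in Icc (0 : ℝ) 1, (Real.cos (Real.pi * (x - c.1)) ^ 2) ^ n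
  set J := ∫ y in Icc (0 : ℝ) 1, (Real.cos (Real.pi * (y - c.2)) ^ 2) ^ n
  have hI : I ^ 2 ≤ (2 * (n : ℝ) + 1)⁻¹ := sq_integral_cos_sq_pow_le c.1 n
  have hJ : J ^ 2 ≤ (2 * (n : ℝ) + 1)⁻¹ := sq_integral_cos_sq_pow_le c.2 n
  calc I * J ≤ (2 * (n : ℝ) + 1)⁻¹ := by linarith [two_mul_le_add_sq I J]
    _ ≤ ((n : ℝ) + 1)⁻¹ := by gcongr; linarith

lemma tendsto_H1norm_logProfile_torusPeak (c : ℝ × ℝ) :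
    Tendsto (fun N => H1norm fun p => logProfile N (torusPeak (q2 c) (q2 p))) atTop (𝓝 0) :=
  tendsto_H1norm_logProfile_comp (contDiff_torusPeak_q2 c) (fun p => torusPeak_mem_Icc _ _)
    (by positivity) (sq_norm_fderiv_torusPeak_q2_le c)
    (fun n => (setIntegral_torusPeak_q2_pow_le c n).trans_eq (one_mul _).symm)

end TorusPeak

lemma q2_surjective : Function.Surjective q2 := by
  rintro ⟨z, w⟩
  obtain ⟨x, rfl⟩ := QuotientAddGroup.mk_surjective z
  obtain ⟨y, rfl⟩ := QuotientAddGroup.mk_surjective w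
  exact ⟨(x, y), rfl⟩

lemma q2_add_one_fst (p : ℝ × ℝ) : q2 (p.1 + 1, p.2) = q2 p := by
  simp [q2]

lemma q2_add_one_snd (p : ℝ × ℝ) : q2 (p.1, p.2 + 1) = q2 p := by
  simp [q2]

/-- Delort's Lemma 1.2.5: a finite signed Radon measure `ω = μp - μm` on `𝕋²`
which belongs to `H⁻¹(𝕋²)` — i.e. `|∫ φ dω| ≤ C‖φ‖_{H¹}` for all smooth test
functions `φ` — has no atoms: `ω({x₀}) = 0` for every `x₀ ∈ 𝕋²`. -/
theorem stmt5 (μp μm : Measure T2) [IsFiniteMeasure μp] [IsFiniteMeasure μm]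
    (C : ℝ) (hC : 0 < C)
    (hH1 : ∀ (Φ : ℝ × ℝ → ℝ), ContDiff ℝ (⊤ : ℕ∞) Φ →
      (∀ p : ℝ × ℝ, Φ (p.1 + 1, p.2) = Φ p) →
      (∀ p : ℝ × ℝ, Φ (p.1, p.2 + 1) = Φ p) →
      ∀ φ : T2 → ℝ, (∀ p : ℝ × ℝ, φ (q2 p) = Φ p) →
        |(∫ x, φ x ∂μp) - (∫ x, φ x ∂μm)| ≤ C * H1norm Φ) :
    ∀ x₀ : T2, μp {x₀} = μm {x₀} := by
  intro x₀
  obtain ⟨c, rfl⟩ := q2_surjective x₀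
  set φ : ℕ → T2 → ℝ := fun N x => logProfile N (torusPeak (q2 c) x)
  have hlim (μ : Measure T2) [IsFiniteMeasure μ] :
      Tendsto (fun N => ∫ x, φ N x ∂μ) atTop (𝓝 (μ.real {q2 c})) := by
    rw [← torusPeak_preimage_one]
    exact tendsto_integral_logProfile μ (continuous_torusPeak _).measurable (torusPeak_mem_Icc _)
  have hbound (N : ℕ) :
      |(∫ x, φ N x ∂μp) - (∫ x, φ N x ∂μm)| ≤ C * H1norm (fun p => φ N (q2 p)) :=
    hH1 _ ((contDiff_logProfile N).comp (contDiff_torusPeak_q2 c))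
      (fun p => congrArg (φ N) (q2_add_one_fst p)) (fun p => congrArg (φ N) (q2_add_one_snd p))
      (φ N) (fun _ => rfl)
  have hzero : |μp.real {q2 c} - μm.real {q2 c}| ≤ C * 0 :=
    le_of_tendsto_of_tendsto' ((hlim μp).sub (hlim μm)).abs
      ((tendsto_H1norm_logProfile_torusPeak c).const_mul C) hbound
  rw [mul_zero, abs_nonpos_iff, sub_eq_zero] at hzero
  exact (measureReal_eq_measureReal_iff).1 hzero
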